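/- arXiv:math/0609058 — 2 statements merged into one kernel-verified Lean document; each statement's English description precedes it below -/
import Mathlib

section
/- For every real number ξ, the limit as u → 0⁻ of (1/(2πi)) ∫_{−∞}^{∞} [(−2η)/((1+η²)³ (ξ + iu − η))] dη exists and equals (1/2)[ −i/(8(ξ−i)²) + i(3ξ−7i)/(8(ξ−i)³) ]. -/
open MeasureTheory Complex

/-!
Partial fractions turn `-2η / (1 + η²)³` into a combination of the powers `(η - p)^(-n)`, `n ≥ 2`,
at the poles `p = ±i`, and the Cauchy transform at `z` of each such power is elementary: dividing
repeatedly by `z - p` reduces it to `(η - p)⁻¹`, because the higher powers have an antiderivative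
vanishing at infinity, and the transform of `(η - p)⁻¹` is a difference of two principal values
`∫ (η - q)⁻¹ dη = sign (Im q) πi`. For `Im z < 0` the pole `-i` therefore contributes nothing and
the pole `i` contributes `(z - i)^(-n)`, which is continuous up to the real axis.
-/

section CauchyTransform

open Filter Topology

variable {p q z v w : ℂ} {f g : ℝ → ℂ}

lemma ofReal_sub_ne_zero (hp : p.im ≠ 0) (x : ℝ) : (x : ℂ) - p ≠ 0 := fun h =>
  hp (by simpa using congrArg im h)

lemma continuous_inv_ofReal_sub (hp : p.im ≠ 0) : Continuous fun x : ℝ => ((x : ℂ) - p)⁻¹ :=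
  (by fun_prop : Continuous fun x : ℝ => (x : ℂ) - p).inv₀ (ofReal_sub_ne_zero hp)

lemma tendsto_inv_ofReal_sub_cobounded (p : ℂ) :
    Tendsto (fun x : ℝ => ((x : ℂ) - p)⁻¹) (Bornology.cobounded ℝ) (𝓝 0) :=
  tendsto_inv₀_cobounded.comp <|
    (tendsto_sub_const_cobounded p).comp (RCLike.tendsto_ofReal_cobounded_cobounded ℂ)

lemma norm_inv_ofReal_sub_le (hp : p.im ≠ 0) (x : ℝ) :
    ‖((x : ℂ) - p)⁻¹‖ ≤ |p.im|⁻¹ := by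
  rw [norm_inv]
  gcongr
  simpa using abs_im_le_norm ((x : ℂ) - p)

lemma memLp_two_inv_ofReal_sub (hp : p.im ≠ 0) :
    MemLp (fun x : ℝ => ((x : ℂ) - p)⁻¹) 2 := by
  rw [memLp_two_iff_integrable_sq_norm (continuous_inv_ofReal_sub hp).aestronglyMeasurable]
  have hint : Integrable fun x : ℝ => (p.im ^ 2)⁻¹ * (1 + ((x - p.re) / p.im) ^ 2)⁻¹ :=
    ((integrable_inv_one_add_sq.comp_div hp).comp_sub_right p.re).const_mul _
  refine hint.congr (.of_forall fun x => ?_)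
  have hnorm : ‖(x : ℂ) - p‖ ^ 2 = (x - p.re) ^ 2 + p.im ^ 2 := by
    rw [Complex.sq_norm, normSq_apply]
    simp only [sub_re, ofReal_re, sub_im, ofReal_im]
    ring
  simp only [norm_inv, inv_pow, hnorm, ← mul_inv]
  field_simp
  ring

lemma integrable_inv_ofReal_sub_pow_mul (hp : p.im ≠ 0) (hq : q.im ≠ 0) (n : ℕ) :
    Integrable fun x : ℝ => ((x : ℂ) - p)⁻¹ ^ (n + 1) * ((x : ℂ) - q)⁻¹ := by
  have hmul : Integrable fun x : ℝ => ((x : ℂ) - p)⁻¹ * ((x : ℂ) - q)⁻¹ :=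
    (memLp_two_inv_ofReal_sub hp).integrable_mul (memLp_two_inv_ofReal_sub hq)
  have hbdd (x : ℝ) : ‖((x : ℂ) - p)⁻¹ ^ n‖ ≤ |p.im|⁻¹ ^ n := by
    rw [norm_pow]
    gcongr
    exact norm_inv_ofReal_sub_le hp x
  simp only [pow_succ, mul_assoc]
  exact hmul.bdd_mul ((continuous_inv_ofReal_sub hp).pow n).aestronglyMeasurable (.of_forall hbdd)

lemma integral_inv_ofReal_sub_pow_eq_zero (hp : p.im ≠ 0) (n : ℕ) :
    ∫ x : ℝ, ((x : ℂ) - p)⁻¹ ^ (n + 2) = 0 := by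
  have hderiv (x : ℝ) : HasDerivAt (fun x : ℝ => -((n : ℂ) + 1)⁻¹ * ((x : ℂ) - p)⁻¹ ^ (n + 1))
      (((x : ℂ) - p)⁻¹ ^ (n + 2)) x := by
    have hsub : HasDerivAt (fun x : ℝ => (x : ℂ) - p) 1 x := ofRealCLM.hasDerivAt.sub_const p
    refine (((hsub.fun_inv (ofReal_sub_ne_zero hp x)).fun_pow (n + 1)).const_mul _).congr_deriv ?_
    have hn : (n : ℂ) + 1 ≠ 0 := n.cast_add_one_ne_zero
    have hx := ofReal_sub_ne_zero hp x
    simp only [inv_pow, Nat.cast_add, Nat.cast_one, Nat.add_sub_cancel]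
    field_simp
    ring
  have hint : Integrable fun x : ℝ => ((x : ℂ) - p)⁻¹ ^ (n + 2) :=
    integrable_inv_ofReal_sub_pow_mul hp hp n
  have hlim : Tendsto (fun x : ℝ => -((n : ℂ) + 1)⁻¹ * ((x : ℂ) - p)⁻¹ ^ (n + 1))
      (Bornology.cobounded ℝ) (𝓝 0) := by
    simpa using ((tendsto_inv_ofReal_sub_cobounded p).pow (n + 1)).const_mul (-((n : ℂ) + 1)⁻¹)
  simpa using integral_of_hasDerivAt_of_tendsto hderiv hint
    (hlim.mono_left (by simp)) (hlim.mono_left (by simp))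

lemma tendsto_log_ofReal_mul_sub_sub_log (hv : v ∈ slitPlane) (w : ℂ) :
    Tendsto (fun R : ℝ => log (R * v - w) - Real.log R) atTop (𝓝 (log v)) := by
  have hdir : Tendsto (fun R : ℝ => v - w * (R : ℂ)⁻¹) atTop (𝓝 v) := by
    have hinv : Tendsto (fun R : ℝ => (R : ℂ)⁻¹) atTop (𝓝 0) :=
      tendsto_inv₀_cobounded.comp (RCLike.tendsto_ofReal_atTop_cobounded ℂ)
    simpa using (hinv.const_mul w).const_sub v
  refine (hdir.clog hv).congr' ?_
  filter_upwards [eventually_gt_atTop 0, hdir.eventually_ne (slitPlane_ne_zero hv)] with R hR hne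
  have hR' : (R : ℂ) ≠ 0 := ofReal_ne_zero.2 hR.ne'
  have hscale : R * v - w = R * (v - w * (R : ℂ)⁻¹) := by field_simp
  rw [hscale, log_ofReal_mul hR hne, add_sub_cancel_left]

lemma intervalIntegral_inv_ofReal_sub_of_im_pos (hp : 0 < p.im) (a b : ℝ) :
    ∫ x in a..b, ((x : ℂ) - p)⁻¹ = log (I * (b - p)) - log (I * (a - p)) := by
  -- The factor `I` rotates the line `x - p` into the right half-plane, away from the branch cut.
  have hderiv (x : ℝ) : HasDerivAt (fun x : ℝ => log (I * (x - p))) ((x : ℂ) - p)⁻¹ x := by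
    have hline : HasDerivAt (fun x : ℝ => I * ((x : ℂ) - p)) (I * 1) x :=
      (ofRealCLM.hasDerivAt.sub_const p).const_mul I
    refine (hline.clog_real (Or.inl (by simpa using hp))).congr_deriv ?_
    rw [mul_div_mul_left _ _ I_ne_zero, one_div]
  exact intervalIntegral.integral_eq_sub_of_hasDerivAt (fun x _ => hderiv x)
    ((continuous_inv_ofReal_sub hp.ne').intervalIntegrable a b)

lemma tendsto_intervalIntegral_inv_ofReal_sub_of_im_pos (hp : 0 < p.im) :
    Tendsto (fun R : ℝ => ∫ x in -R..R, ((x : ℂ) - p)⁻¹) atTop (𝓝 (Real.pi * I)) := by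
  have htop := tendsto_log_ofReal_mul_sub_sub_log (v := I) (by simp [mem_slitPlane_iff]) (I * p)
  have hbot := tendsto_log_ofReal_mul_sub_sub_log (v := -I) (by simp [mem_slitPlane_iff]) (I * p)
  have hval : log I - log (-I) = Real.pi * I := by
    rw [log_I, log_neg_I]
    ring
  rw [← hval]
  refine (htop.sub hbot).congr fun R => ?_
  rw [intervalIntegral_inv_ofReal_sub_of_im_pos hp, sub_sub_sub_cancel_right]
  push_cast
  ring_nf

lemma tendsto_intervalIntegral_inv_ofReal_sub (hp : p.im ≠ 0) :
    Tendsto (fun R : ℝ => ∫ x in -R..R, ((x : ℂ) - p)⁻¹) atTop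
      (𝓝 (Real.sign p.im * (Real.pi * I))) := by
  rcases hp.lt_or_gt with hneg | hpos
  · have hreflect (R : ℝ) :
        -∫ x in -R..R, ((x : ℂ) - -p)⁻¹ = ∫ x in -R..R, ((x : ℂ) - p)⁻¹ :=
      calc -∫ x in -R..R, ((x : ℂ) - -p)⁻¹
        _ = ∫ x in -R..R, (((-x : ℝ) : ℂ) - p)⁻¹ := by
          rw [← intervalIntegral.integral_neg]
          congr with x
          rw [← inv_neg]
          push_cast
          ring
        _ = ∫ x in -R..R, ((x : ℂ) - p)⁻¹ := by
          rw [intervalIntegral.integral_comp_neg fun x : ℝ => ((x : ℂ) - p)⁻¹, neg_neg]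
    have hlim := (tendsto_intervalIntegral_inv_ofReal_sub_of_im_pos (p := -p) (by simpa)).neg
    simpa only [hreflect, Real.sign_of_neg hneg, ofReal_neg, ofReal_one, neg_one_mul] using hlim
  · simpa [Real.sign_of_pos hpos] using tendsto_intervalIntegral_inv_ofReal_sub_of_im_pos hpos

lemma inv_ofReal_sub_mul_inv_ofReal_sub (hp : p.im ≠ 0) (hq : q.im ≠ 0) (hpq : p ≠ q) (x : ℝ) :
    ((x : ℂ) - p)⁻¹ * ((x : ℂ) - q)⁻¹ = (((x : ℂ) - q)⁻¹ - ((x : ℂ) - p)⁻¹) * (q - p)⁻¹ := by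
  have hx := ofReal_sub_ne_zero hp x
  have hx' := ofReal_sub_ne_zero hq x
  have hqp := sub_ne_zero.2 hpq.symm
  field_simp
  ring

lemma integral_inv_ofReal_sub_mul (hp : p.im ≠ 0) (hq : q.im ≠ 0) (hpq : p ≠ q) :
    ∫ x : ℝ, ((x : ℂ) - p)⁻¹ * ((x : ℂ) - q)⁻¹ =
      (Real.sign q.im - Real.sign p.im) * (Real.pi * I) * (q - p)⁻¹ := by
  have hinterval (R : ℝ) : ∫ x in -R..R, ((x : ℂ) - p)⁻¹ * ((x : ℂ) - q)⁻¹ =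
      ((∫ x in -R..R, ((x : ℂ) - q)⁻¹) - ∫ x in -R..R, ((x : ℂ) - p)⁻¹) * (q - p)⁻¹ := by
    simp only [inv_ofReal_sub_mul_inv_ofReal_sub hp hq hpq, intervalIntegral.integral_mul_const]
    rw [intervalIntegral.integral_sub ((continuous_inv_ofReal_sub hq).intervalIntegrable _ _)
      ((continuous_inv_ofReal_sub hp).intervalIntegrable _ _)]
  have hint : Integrable fun x : ℝ => ((x : ℂ) - p)⁻¹ * ((x : ℂ) - q)⁻¹ :=
    (memLp_two_inv_ofReal_sub hp).integrable_mul (memLp_two_inv_ofReal_sub hq)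
  refine tendsto_nhds_unique
    (intervalIntegral_tendsto_integral hint tendsto_neg_atTop_atBot tendsto_id) ?_
  simpa only [id, hinterval, sub_mul] using
    ((tendsto_intervalIntegral_inv_ofReal_sub hq).sub
      (tendsto_intervalIntegral_inv_ofReal_sub hp)).mul_const (q - p)⁻¹

lemma integral_inv_ofReal_sub_pow_mul (hp : p.im ≠ 0) (hq : q.im ≠ 0) (n : ℕ) :
    ∫ x : ℝ, ((x : ℂ) - p)⁻¹ ^ (n + 1) * ((x : ℂ) - q)⁻¹ =
      (Real.sign q.im - Real.sign p.im) * (Real.pi * I) * (q - p)⁻¹ ^ (n + 1) := by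
  rcases eq_or_ne p q with rfl | hpq
  · simp only [← pow_succ, integral_inv_ofReal_sub_pow_eq_zero hp n, sub_self, zero_mul]
  induction n with
  | zero => simpa only [zero_add, pow_one] using integral_inv_ofReal_sub_mul hp hq hpq
  | succ n ih =>
    have hstep (x : ℝ) : ((x : ℂ) - p)⁻¹ ^ (n + 2) * ((x : ℂ) - q)⁻¹ =
        (((x : ℂ) - p)⁻¹ ^ (n + 1) * ((x : ℂ) - q)⁻¹ - ((x : ℂ) - p)⁻¹ ^ (n + 2)) *
          (q - p)⁻¹ := by
      rw [pow_succ _ (n + 1), mul_assoc, inv_ofReal_sub_mul_inv_ofReal_sub hp hq hpq]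
      ring
    have hpow : Integrable fun x : ℝ => ((x : ℂ) - p)⁻¹ ^ (n + 2) :=
      integrable_inv_ofReal_sub_pow_mul hp hp n
    simp only [hstep, integral_mul_const]
    rw [integral_sub (integrable_inv_ofReal_sub_pow_mul hp hq n) hpow, ih,
      integral_inv_ofReal_sub_pow_eq_zero hp n]
    ring

/-- `HasCauchyTransform f z w` says that the Cauchy transform `(2πi)⁻¹ ∫ f(η) / (z - η) dη` of `f`
at `z` converges absolutely and equals `w`. The projection `π⁺ f` of Boutet de Monvel's calculus is
the boundary value of this transform from the lower half-plane. -/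
def HasCauchyTransform (f : ℝ → ℂ) (z w : ℂ) : Prop :=
  Integrable (fun x : ℝ => f x / (z - x)) ∧ 1 / (2 * Real.pi * I) * ∫ x : ℝ, f x / (z - x) = w

namespace HasCauchyTransform

lemma add (hf : HasCauchyTransform f z v) (hg : HasCauchyTransform g z w) :
    HasCauchyTransform (fun x => f x + g x) z (v + w) := by
  simp only [HasCauchyTransform, add_div]
  exact ⟨hf.1.add hg.1, by rw [integral_add hf.1 hg.1, mul_add, hf.2, hg.2]⟩

lemma const_mul (hf : HasCauchyTransform f z w) (c : ℂ) :
    HasCauchyTransform (fun x => c * f x) z (c * w) := by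
  simp only [HasCauchyTransform, mul_div_assoc]
  exact ⟨hf.1.const_mul c, by rw [integral_const_mul, mul_left_comm, hf.2]⟩

end HasCauchyTransform

lemma hasCauchyTransform_inv_sub_pow (hp : p.im ≠ 0) (hz : z.im ≠ 0) (n : ℕ) :
    HasCauchyTransform (fun x : ℝ => ((x : ℂ) - p)⁻¹ ^ (n + 1)) z
      ((Real.sign p.im - Real.sign z.im) / 2 * (z - p)⁻¹ ^ (n + 1)) := by
  have hkernel (x : ℝ) : ((x : ℂ) - p)⁻¹ ^ (n + 1) / (z - x) =
      -(((x : ℂ) - p)⁻¹ ^ (n + 1) * ((x : ℂ) - z)⁻¹) := by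
    rw [div_eq_mul_inv, ← neg_sub (x : ℂ) z, inv_neg, mul_neg]
  simp only [HasCauchyTransform, hkernel]
  refine ⟨(integrable_inv_ofReal_sub_pow_mul hp hz n).neg, ?_⟩
  rw [integral_neg, integral_inv_ofReal_sub_pow_mul hp hz n]
  have hpi : (Real.pi : ℂ) ≠ 0 := ofReal_ne_zero.2 Real.pi_ne_zero
  have hI : I ≠ 0 := I_ne_zero
  field_simp
  ring

lemma hasCauchyTransform_inv_sub_I_pow (hz : z.im < 0) (n : ℕ) :
    HasCauchyTransform (fun x : ℝ => ((x : ℂ) - I)⁻¹ ^ (n + 1)) z ((z - I)⁻¹ ^ (n + 1)) := by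
  simpa [Real.sign_of_neg hz] using hasCauchyTransform_inv_sub_pow (p := I) (by simp) hz.ne n

lemma hasCauchyTransform_inv_add_I_pow (hz : z.im < 0) (n : ℕ) :
    HasCauchyTransform (fun x : ℝ => ((x : ℂ) + I)⁻¹ ^ (n + 1)) z 0 := by
  simpa [Real.sign_of_neg hz, Real.sign_neg] using
    hasCauchyTransform_inv_sub_pow (p := -I) (by simp) hz.ne n

lemma neg_two_mul_div_one_add_sq_pow_three (hv : v - I ≠ 0) (hv' : v + I ≠ 0) :
    -2 * v / (1 + v ^ 2) ^ 3 =
      1 / 4 * (v - I)⁻¹ ^ 3 + I / 8 * (v - I)⁻¹ ^ 2 +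
        (1 / 4 * (v + I)⁻¹ ^ 3 + -(I / 8) * (v + I)⁻¹ ^ 2) := by
  have hfactor : 1 + v ^ 2 = (v - I) * (v + I) := by linear_combination I_sq
  rw [hfactor]
  field_simp
  ring_nf
  simp only [I_sq, I_pow_four]
  ring

lemma hasCauchyTransform_neg_two_mul_div_one_add_sq_pow_three (hz : z.im < 0) :
    HasCauchyTransform (fun x : ℝ => -2 * (x : ℂ) / (1 + (x : ℂ) ^ 2) ^ 3) z
      (1 / 4 * (z - I)⁻¹ ^ 3 + I / 8 * (z - I)⁻¹ ^ 2) := by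
  have hpartial (x : ℝ) := neg_two_mul_div_one_add_sq_pow_three
    (ofReal_sub_ne_zero (p := I) (by simp) x)
    (by simpa using ofReal_sub_ne_zero (p := -I) (by simp) x)
  have hplus := ((hasCauchyTransform_inv_sub_I_pow hz 2).const_mul (1 / 4)).add
    ((hasCauchyTransform_inv_sub_I_pow hz 1).const_mul (I / 8))
  have hminus := ((hasCauchyTransform_inv_add_I_pow hz 2).const_mul (1 / 4)).add
    ((hasCauchyTransform_inv_add_I_pow hz 1).const_mul (-(I / 8)))
  simpa only [hpartial, mul_zero, add_zero] using hplus.add hminus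

lemma half_mul_div_add_div_eq_inv_sub_I_pow (hv : v - I ≠ 0) :
    1 / 2 * (-I / (8 * (v - I) ^ 2) + I * (3 * v - 7 * I) / (8 * (v - I) ^ 3)) =
      1 / 4 * (v - I)⁻¹ ^ 3 + I / 8 * (v - I)⁻¹ ^ 2 := by
  have hnum : I * (3 * v - 7 * I) = 3 * I * (v - I) + 4 := by linear_combination (-4) * I_sq
  rw [hnum]
  field_simp
  ring

end CauchyTransform

/-- for every real ξ, the limit as u → 0⁻ of
(1/(2πi)) ∫_{-∞}^{∞} (−2η) dη / ((1+η²)³ (ξ + iu − η)) equals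
(1/2)[ −i/(8(ξ−i)²) + i(3ξ−7i)/(8(ξ−i)³) ]. -/
theorem pi_plus_neg_two_eta_over_one_plus_sq_cube (ξ : ℝ) :
    Filter.Tendsto
      (fun u : ℝ =>
        (1 / (2 * (Real.pi : ℂ) * I)) *
          ∫ η : ℝ, (-2 * (η : ℂ)) /
            ((1 + (η : ℂ) ^ 2) ^ 3 * ((ξ : ℂ) + I * (u : ℂ) - (η : ℂ))))
      (nhdsWithin 0 (Set.Iio 0))
      (nhds ((1 / 2) * (-I / (8 * ((ξ : ℂ) - I) ^ 2)
        + I * (3 * (ξ : ℂ) - 7 * I) / (8 * ((ξ : ℂ) - I) ^ 3)))) := by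
  have hξ : (ξ : ℂ) - I ≠ 0 := ofReal_sub_ne_zero (by simp) ξ
  have hcont : ContinuousAt (fun u : ℝ => 1 / 4 * ((ξ : ℂ) + I * u - I)⁻¹ ^ 3 +
      I / 8 * ((ξ : ℂ) + I * u - I)⁻¹ ^ 2) 0 := by
    have hinv : ContinuousAt (fun u : ℝ => ((ξ : ℂ) + I * u - I)⁻¹) 0 :=
      ContinuousAt.inv₀ (by fun_prop) (by simpa using hξ)
    fun_prop
  have hlim := hcont.tendsto.mono_left (nhdsWithin_le_nhds (s := Set.Iio 0))
  rw [half_mul_div_add_div_eq_inv_sub_I_pow hξ]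
  simp only [ofReal_zero, mul_zero, add_zero] at hlim
  refine hlim.congr' ?_
  filter_upwards [self_mem_nhdsWithin] with u hu
  have hz : ((ξ : ℂ) + I * u).im < 0 := by simpa using hu
  simpa only [div_div] using
    (hasCauchyTransform_neg_two_mul_div_one_add_sq_pow_three hz).2.symm
end

section
/- Let A be an associative unital algebra over ℂ and τ : A → ℂ a ℂ-linear functional satisfying τ(xy) = τ(yx) for all x, y ∈ A and τ(1) = 4. Let u, v ∈ A satisfy u² = v² = −1 and uv + vu = 0. Then for every real number ξ, τ( [ (1/(4i(ξ−i)) + 1/(8(ξ−i)²) − (3ξ−7i)/(8(ξ−i)³)) v + (−1/(8(ξ−i)²) + (3ξ−7i)/(8(ξ−i)³)) iu ] · [ (1/(1+ξ²) − 2ξ²/(1+ξ²)²) v − (2ξ/(1+ξ²)²) u ] ) = (−iξ² − ξ + 4i) / ((ξ−i)³(ξ+i)²). -/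
open Complex

/-!
Cyclicity of `τ` turns the trace of a product into half the trace of the anticommutator, which for
vectors in the Clifford plane spanned by `u` (tangential) and `v` (normal) is the scalar `-2` times
the pairing for which `u` and `v` are orthonormal. Only a rational identity remains: over the common
denominator `4 (z - i) ^ 5 (z + i) ^ 2` the numerator of the pairing has a double zero at `z = i`,
so two of the five powers of `z - i` cancel.
-/

section Clifford

variable {R A : Type*} [CommRing R] [Ring A] [Algebra R A]

lemma anticommutator_smul_add_smul_eq_algebraMap {u v : A} (hu : u ^ 2 = -1) (hv : v ^ 2 = -1)
    (huv : u * v + v * u = 0) (a b c d : R) :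
    (a • v + b • u) * (c • v + d • u) + (c • v + d • u) * (a • v + b • u) =
      algebraMap R A (-2 * (a * c + b * d)) := by
  have expand : (a • v + b • u) * (c • v + d • u) + (c • v + d • u) * (a • v + b • u) =
      (2 * (a * c)) • v ^ 2 + (2 * (b * d)) • u ^ 2 + (a * d + b * c) • (u * v + v * u) := by
    simp only [add_mul, mul_add, smul_mul_smul_comm, sq]
    module
  rw [expand, hu, hv, huv, Algebra.algebraMap_eq_smul_one]
  module

lemma two_mul_map_mul_of_anticommutator_eq_algebraMap {τ : A →ₗ[R] R} {x y : A} {r : R}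
    (hτ : τ (x * y) = τ (y * x)) (hxy : x * y + y * x = algebraMap R A r) :
    2 * τ (x * y) = r * τ 1 :=
  calc 2 * τ (x * y) = τ (x * y + y * x) := by rw [map_add, ← hτ, two_mul]
    _ = r * τ 1 := by rw [hxy, Algebra.algebraMap_eq_smul_one, map_smul, smul_eq_mul]

lemma map_smul_add_smul_mul_smul_add_smul [NoZeroDivisors R] [NeZero (2 : R)] {τ : A →ₗ[R] R}
    (hτ : ∀ x y : A, τ (x * y) = τ (y * x)) {u v : A} (hu : u ^ 2 = -1) (hv : v ^ 2 = -1)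
    (huv : u * v + v * u = 0) (a b c d : R) :
    τ ((a • v + b • u) * (c • v + d • u)) = -(a * c + b * d) * τ 1 := by
  have h := two_mul_map_mul_of_anticommutator_eq_algebraMap (hτ _ _)
    (anticommutator_smul_add_smul_eq_algebraMap hu hv huv a b c d)
  refine mul_left_cancel₀ (two_ne_zero' R) ?_
  linear_combination h

end Clifford

section Symbol

variable {K : Type*} [Field K] {i z : K}

lemma one_add_sq_eq_sub_mul_add (hi : i ^ 2 = -1) : 1 + z ^ 2 = (z - i) * (z + i) := by
  linear_combination hi

lemma normal_coeff_right_eq_div (hz : 1 + z ^ 2 ≠ 0) :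
    1 / (1 + z ^ 2) - 2 * z ^ 2 / (1 + z ^ 2) ^ 2 = (1 - z ^ 2) / (1 + z ^ 2) ^ 2 := by
  field_simp
  ring

lemma pairing_numerator_eq_mul_sub_sq (hi : i ^ 2 = -1) :
    -((-i * z ^ 2 - 3 * z + 4 * i) * (1 - z ^ 2) + (i * z + 3) * -(2 * z)) =
      (-i * z ^ 2 - z + 4 * i) * (z - i) ^ 2 := by
  linear_combination (-2 * z ^ 3 + i * z ^ 2 + 9 * z - 4 * i) * hi

variable [NeZero (2 : K)]

lemma normal_coeff_left_eq_div (hi : i ^ 2 = -1) (hz : z - i ≠ 0) :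
    1 / (4 * i * (z - i)) + 1 / (8 * (z - i) ^ 2) - (3 * z - 7 * i) / (8 * (z - i) ^ 3) =
      (-i * z ^ 2 - 3 * z + 4 * i) / (4 * (z - i) ^ 3) := by
  have h2 : (2 : K) ≠ 0 := two_ne_zero
  have inv_i : i⁻¹ = -i := inv_eq_of_mul_eq_one_right (by linear_combination -hi)
  have h4 : (4 : K) = 2 ^ 2 := by norm_num
  have h8 : (8 : K) = 2 ^ 3 := by norm_num
  rw [one_div, mul_inv, mul_inv, inv_i, h4, h8]
  field_simp
  linear_combination (4 * z - 2 * i) * hi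

lemma tangential_coeff_left_eq_div (hi : i ^ 2 = -1) (hz : z - i ≠ 0) :
    (-1 / (8 * (z - i) ^ 2) + (3 * z - 7 * i) / (8 * (z - i) ^ 3)) * i =
      (i * z + 3) / (4 * (z - i) ^ 3) := by
  have h2 : (2 : K) ≠ 0 := two_ne_zero
  have h4 : (4 : K) = 2 ^ 2 := by norm_num
  have h8 : (8 : K) = 2 ^ 3 := by norm_num
  rw [h4, h8]
  field_simp
  linear_combination -6 * hi

lemma neg_coeff_pairing_eq_div (hi : i ^ 2 = -1) (hz_sub : z - i ≠ 0) (hz_add : z + i ≠ 0) :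
    -((1 / (4 * i * (z - i)) + 1 / (8 * (z - i) ^ 2) - (3 * z - 7 * i) / (8 * (z - i) ^ 3)) *
          (1 / (1 + z ^ 2) - 2 * z ^ 2 / (1 + z ^ 2) ^ 2) +
        (-1 / (8 * (z - i) ^ 2) + (3 * z - 7 * i) / (8 * (z - i) ^ 3)) * i *
          -(2 * z / (1 + z ^ 2) ^ 2)) =
      (-i * z ^ 2 - z + 4 * i) / ((z - i) ^ 3 * (z + i) ^ 2) / 4 := by
  have hz : 1 + z ^ 2 ≠ 0 := by
    rw [one_add_sq_eq_sub_mul_add hi]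
    exact mul_ne_zero hz_sub hz_add
  rw [normal_coeff_left_eq_div hi hz_sub, tangential_coeff_left_eq_div hi hz_sub,
    normal_coeff_right_eq_div hz]
  calc
    _ = -((-i * z ^ 2 - 3 * z + 4 * i) * (1 - z ^ 2) + (i * z + 3) * -(2 * z)) /
          (4 * (z - i) ^ 3 * (1 + z ^ 2) ^ 2) := by
      rw [← neg_div, div_mul_div_comm, div_mul_div_comm, ← add_div, ← neg_div]
    _ = (-i * z ^ 2 - z + 4 * i) * (z - i) ^ 2 /
          ((z - i) ^ 3 * (z + i) ^ 2 * 4 * (z - i) ^ 2) := by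
      rw [pairing_numerator_eq_mul_sub_sq hi, one_add_sq_eq_sub_mul_add hi]
      congr 1
      ring
    _ = _ := by rw [mul_div_mul_right _ _ (pow_ne_zero 2 hz_sub), div_div]

end Symbol

theorem trace_identity_2_39_general {K A : Type*} [Field K] [NeZero (2 : K)] [Ring A] [Algebra K A]
    {τ : A →ₗ[K] K} (hτ : ∀ x y : A, τ (x * y) = τ (y * x)) {u v : A} (hu : u ^ 2 = -1)
    (hv : v ^ 2 = -1) (huv : u * v + v * u = 0) {i z : K} (hi : i ^ 2 = -1) (hz_sub : z - i ≠ 0)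
    (hz_add : z + i ≠ 0) :
    τ (((1 / (4 * i * (z - i)) + 1 / (8 * (z - i) ^ 2) - (3 * z - 7 * i) / (8 * (z - i) ^ 3)) • v
        + ((-1 / (8 * (z - i) ^ 2) + (3 * z - 7 * i) / (8 * (z - i) ^ 3)) * i) • u) *
       ((1 / (1 + z ^ 2) - 2 * z ^ 2 / (1 + z ^ 2) ^ 2) • v
        - (2 * z / (1 + z ^ 2) ^ 2) • u))
    = τ 1 / 4 * ((-i * z ^ 2 - z + 4 * i) / ((z - i) ^ 3 * (z + i) ^ 2)) := by
  rw [sub_eq_add_neg (_ • v), ← neg_smul, map_smul_add_smul_mul_smul_add_smul hτ hu hv huv,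
    neg_coeff_pairing_eq_div hi hz_sub hz_add, div_mul_comm]

/-- trace identity (2.39). -/
theorem trace_identity_2_39 (A : Type*) [Ring A] [Algebra ℂ A]
    (τ : A →ₗ[ℂ] ℂ) (hτ : ∀ x y : A, τ (x * y) = τ (y * x)) (hτ1 : τ 1 = 4)
    (u v : A) (hu : u ^ 2 = -1) (hv : v ^ 2 = -1) (huv : u * v + v * u = 0)
    (ξ : ℝ) :
    τ (((1 / (4 * I * ((ξ : ℂ) - I)) + 1 / (8 * ((ξ : ℂ) - I) ^ 2)
          - (3 * (ξ : ℂ) - 7 * I) / (8 * ((ξ : ℂ) - I) ^ 3)) • v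
        + ((-1 / (8 * ((ξ : ℂ) - I) ^ 2)
          + (3 * (ξ : ℂ) - 7 * I) / (8 * ((ξ : ℂ) - I) ^ 3)) * I) • u) *
       ((1 / (1 + (ξ : ℂ) ^ 2) - 2 * (ξ : ℂ) ^ 2 / (1 + (ξ : ℂ) ^ 2) ^ 2) • v
        - (2 * (ξ : ℂ) / (1 + (ξ : ℂ) ^ 2) ^ 2) • u))
    = (-I * (ξ : ℂ) ^ 2 - (ξ : ℂ) + 4 * I)
        / (((ξ : ℂ) - I) ^ 3 * ((ξ : ℂ) + I) ^ 2) := by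
  have hξ_sub : (ξ : ℂ) - I ≠ 0 := fun h ↦ by simpa using congrArg im h
  have hξ_add : (ξ : ℂ) + I ≠ 0 := fun h ↦ by simpa using congrArg im h
  rw [trace_identity_2_39_general hτ hu hv huv I_sq hξ_sub hξ_add, hτ1,
    div_self (by norm_num), one_mul]
end
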